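/- There exist a constant c > 0 and n₀ such that for all n ≥ n₀, the online Ramsey number satisfies r̃(3,n) ≥ c · n³/(log n)², where log denotes the natural logarithm. -/

import Mathlib

open scoped Classical

namespace OnlineRamseyGame

/-- A valid Builder strategy: it never builds a loop, and along any play the
edges built are pairwise distinct. -/
def ValidBuilder {V : Type*} (B : List Bool → Sym2 V) : Prop :=
  (∀ h : List Bool, ¬ (B h).IsDiag) ∧
  ∀ h : List Bool, ∀ i : ℕ, i < h.length → B (h.take i) ≠ B h

/-- The history of Painter's colors after `t` turns against Painter strategy `P`
(Builder's moves are determined by this history). -/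
def histOf (P : List Bool → Bool) : ℕ → List Bool
  | 0 => []
  | t + 1 => histOf P t ++ [P (histOf P t)]

/-- The graph built by `edge` contains a monochromatic clique on `k` vertices in
color `col` within the first `N` turns. -/
def HasMonoClique {V : Type*} (edge : ℕ → Sym2 V) (color : ℕ → Bool)
    (N k : ℕ) (col : Bool) : Prop :=
  ∃ S : Finset V, S.card = k ∧
    ∀ u ∈ S, ∀ v ∈ S, u ≠ v → ∃ t, t < N ∧ edge t = s(u, v) ∧ color t = col

/-- Builder has a valid strategy winning the `(m,n)` online Ramsey game within `N`
turns against every Painter strategy (red = `true`, blue = `false`). -/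
def BuilderWins (m n N : ℕ) : Prop :=
  ∃ B : List Bool → Sym2 ℕ, ValidBuilder B ∧
    ∀ P : List Bool → Bool,
      HasMonoClique (fun t => B (histOf P t)) (fun t => P (histOf P t)) N m true ∨
      HasMonoClique (fun t => B (histOf P t)) (fun t => P (histOf P t)) N n false

/-- The online Ramsey number `r̃(m,n)`: the least `N` such that Builder can
guarantee a win within `N` turns. -/
noncomputable def onlineRamsey (m n : ℕ) : ℕ := sInf {N | BuilderWins m n N}


/-! ### Combinatorial notions along a run -/

/-- degree of `v` before turn `t` -/
noncomputable def deg (e : ℕ → Sym2 ℕ) (t v : ℕ) : ℕ :=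
  ((Finset.range t).filter (fun s => v ∈ e s)).card

/-- `uv` is red before turn `t` -/
def Red (e : ℕ → Sym2 ℕ) (c : ℕ → Bool) (t u v : ℕ) : Prop :=
  ∃ s, s < t ∧ e s = s(u, v) ∧ c s = true

/-- the edge of turn `t` would close a red triangle -/
def Closing (e : ℕ → Sym2 ℕ) (c : ℕ → Bool) (t : ℕ) : Prop :=
  ∃ u v w, e t = s(u, v) ∧ Red e c t u w ∧ Red e c t v w

/-- Painter really makes a choice at turn `t` -/
def Flip (d : ℕ) (e : ℕ → Sym2 ℕ) (c : ℕ → Bool) (t : ℕ) : Prop :=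
  (∀ v ∈ e t, d ≤ deg e t v) ∧ ¬ Closing e c t

lemma Red.symm {e : ℕ → Sym2 ℕ} {c : ℕ → Bool} {t u v : ℕ} (h : Red e c t u v) :
    Red e c t v u := by
  obtain ⟨s, h1, h2, h3⟩ := h
  exact ⟨s, h1, by rw [h2, Sym2.eq_swap], h3⟩

lemma deg_mono (e : ℕ → Sym2 ℕ) (v : ℕ) {s t : ℕ} (h : s ≤ t) : deg e s v ≤ deg e t v := by
  apply Finset.card_le_card
  apply Finset.filter_subset_filter
  exact Finset.range_mono h

lemma red_heavy {N d : ℕ} {e : ℕ → Sym2 ℕ} {c : ℕ → Bool}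
    (hred : ∀ t < N, c t = true → Flip d e c t) {u w : ℕ} (h : Red e c N u w) :
    d ≤ deg e N w := by
  obtain ⟨s, h1, h2, h3⟩ := h
  have := (hred s h1 h3).1 w (by rw [h2]; simp)
  exact this.trans (deg_mono e w h1.le)

/-- there is no red triangle -/
lemma no_triangle {N d : ℕ} {e : ℕ → Sym2 ℕ} {c : ℕ → Bool}
    (hred : ∀ t < N, c t = true → Flip d e c t) {x y z : ℕ}
    (hxy : x ≠ y) (hxz : x ≠ z) (hyz : y ≠ z)
    (h1 : Red e c N x y) (h2 : Red e c N y z) (h3 : Red e c N x z) : False := by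
  obtain ⟨a, ha, ea, ca⟩ := h1
  obtain ⟨b, hb, eb, cb⟩ := h2
  obtain ⟨g, hg, eg, cg⟩ := h3
  have hab : a ≠ b := by
    rintro rfl
    rw [ea] at eb
    simp only [Sym2.eq_iff] at eb
    omega
  have hag : a ≠ g := by
    rintro rfl
    rw [ea] at eg
    simp only [Sym2.eq_iff] at eg
    omega
  have hbg : b ≠ g := by
    rintro rfl
    rw [eb] at eg
    simp only [Sym2.eq_iff] at eg
    omega
  have key : (b < a ∧ g < a) ∨ (a < b ∧ g < b) ∨ (a < g ∧ b < g) := by omega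
  rcases key with ⟨k1, k2⟩ | ⟨k1, k2⟩ | ⟨k1, k2⟩
  · exact (hred a ha ca).2 ⟨x, y, z, ea, ⟨g, k2, eg, cg⟩, ⟨b, k1, eb, cb⟩⟩
  · exact (hred b hb cb).2 ⟨y, z, x, eb, ⟨a, k1, by rw [ea, Sym2.eq_swap], ca⟩,
      ⟨g, k2, by rw [eg, Sym2.eq_swap], cg⟩⟩
  · exact (hred g hg cg).2 ⟨x, z, y, eg, ⟨a, k1, ea, ca⟩, ⟨b, k2, by rw [eb, Sym2.eq_swap], cb⟩⟩

/-- the finite set of vertices that are heavy at the end -/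
noncomputable def heavy (e : ℕ → Sym2 ℕ) (N d : ℕ) : Finset ℕ :=
  ((Finset.range N).biUnion (fun t => (e t).toFinset)).filter (fun v => d ≤ deg e N v)

lemma mem_heavy {e : ℕ → Sym2 ℕ} {N d v : ℕ} (hd : 1 ≤ d) :
    v ∈ heavy e N d ↔ d ≤ deg e N v := by
  constructor
  · intro h
    exact (Finset.mem_filter.1 h).2
  · intro h
    refine Finset.mem_filter.2 ⟨?_, h⟩
    have : 0 < deg e N v := by omega
    obtain ⟨s, hs⟩ := Finset.card_pos.1 this
    rw [Finset.mem_filter] at hs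
    rw [Finset.mem_biUnion]
    exact ⟨s, hs.1, by simpa using hs.2⟩

lemma heavy_card (e : ℕ → Sym2 ℕ) (N d : ℕ) : (heavy e N d).card * d ≤ 2 * N := by
  calc (heavy e N d).card * d ≤ ∑ v ∈ heavy e N d, deg e N v := by
        rw [← smul_eq_mul]
        exact Finset.card_nsmul_le_sum _ _ _ (fun v hv => (Finset.mem_filter.1 hv).2)
    _ = ∑ v ∈ heavy e N d, ∑ s ∈ Finset.range N, if v ∈ e s then 1 else 0 := by
        simp only [deg, Finset.card_filter]
    _ = ∑ s ∈ Finset.range N, ∑ v ∈ heavy e N d, if v ∈ e s then 1 else 0 := Finset.sum_comm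
    _ ≤ ∑ s ∈ Finset.range N, 2 := by
        apply Finset.sum_le_sum
        intro s _
        rw [← Finset.card_filter]
        calc _ ≤ (e s).toFinset.card := Finset.card_le_card (by
              intro v hv
              simpa using (Finset.mem_filter.1 hv).2)
          _ ≤ 2 := by
              rw [Sym2.card_toFinset]; split_ifs <;> simp
    _ = 2 * N := by simp [mul_comm]

/-- light turns at a given vertex -/
lemma light_card (e : ℕ → Sym2 ℕ) (N d v : ℕ) :
    ((Finset.range N).filter (fun t => v ∈ e t ∧ deg e t v < d)).card ≤ d := by
  have : ((Finset.range N).filter (fun t => v ∈ e t ∧ deg e t v < d)).card ≤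
      (Finset.range d).card := by
    apply Finset.card_le_card_of_injOn (fun t => deg e t v)
    · intro t ht
      simp at ht
      simpa using ht.2.2
    · have key : ∀ a b, v ∈ e a → a < b → deg e a v < deg e b v := by
        intro a b ha hab
        apply Finset.card_lt_card
        refine ⟨Finset.filter_subset_filter _ (Finset.range_mono hab.le), ?_⟩
        intro h
        have := h (Finset.mem_filter.2 ⟨Finset.mem_range.2 hab, ha⟩)
        simp at this
      intro a ha b hb hab
      simp at ha hb hab
      rcases lt_trichotomy a b with h | h | h
      · have := key a b ha.2.1 h; omega
      · exact h
      · have := key b a hb.2.1 h; omega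
  simpa using this

/-- The combinatorial core: no blue clique. -/
lemma no_blue {N n d : ℕ} {e : ℕ → Sym2 ℕ} {c : ℕ → Bool} (hd : 1 ≤ d)
    (hinj : Function.Injective e) (hdiag : ∀ t, ¬ (e t).IsDiag)
    (hred : ∀ t < N, c t = true → Flip d e c t)
    {Δ κ K : ℝ} (hκ : 0 ≤ κ)
    (T1 : ∀ S : Finset ℕ, S.card = n → (∀ v ∈ S, ∃ t, t < N ∧ v ∈ e t) →
      (∀ t < N, (∀ v ∈ e t, v ∈ S) → c t = false) →
      (((Finset.range N).filter (fun t => Flip d e c t ∧ ∀ v ∈ e t, v ∈ S)).card : ℝ) < K)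
    (T2 : ∀ U : Finset ℕ, U.card ≤ 2 * n →
      (((Finset.range N).filter (fun t => c t = true ∧ ∀ v ∈ e t, v ∈ U)).card : ℝ) < n * κ)
    (T3 : ∀ v, (((Finset.range N).filter (fun t => c t = true ∧ v ∈ e t)).card : ℝ) ≤ Δ)
    (hn : 2 ≤ n)
    (hnum : (n : ℝ) * d + (Δ * (n * κ) + (heavy e N d).card * κ ^ 2) + K ≤ (n.choose 2 : ℕ))
    (S : Finset ℕ) (hS : S.card = n)
    (hb : ∀ u ∈ S, ∀ v ∈ S, u ≠ v → ∃ t, t < N ∧ e t = s(u, v) ∧ c t = false) : False := by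
  have hΔ : 0 ≤ Δ := le_trans (by positivity) (T3 0)
  have touched : ∀ v ∈ S, ∃ t, t < N ∧ v ∈ e t := by
    intro v hv
    obtain ⟨u, hu, huv⟩ := Finset.exists_mem_ne (by omega : 1 < S.card) v
    obtain ⟨t, h1, h2, _⟩ := hb u hu v hv huv
    exact ⟨t, h1, by rw [h2]; simp⟩
  have blue : ∀ t < N, (∀ v ∈ e t, v ∈ S) → c t = false := by
    intro t ht h
    have hdt := hdiag t
    obtain ⟨x, y, hxy⟩ : ∃ x y, e t = s(x, y) := Sym2.ind (f := fun z => ∃ x y, z = s(x, y)) (fun x y => ⟨x, y, rfl⟩) (e t)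
    rw [hxy] at h hdt
    obtain ⟨t', h1, h2, h3⟩ := hb x (h x (by simp)) y (h y (by simp)) (by simpa using hdt)
    rw [← hxy] at h2
    rw [← hinj h2]
    exact h3
  -- red neighbours inside `S`
  let R : ℕ → Finset ℕ := fun w => S.filter (fun u => Red e c N u w)
  have hRS : ∀ w u, u ∈ R w → w ∉ S := by
    intro w u hu hw
    rw [Finset.mem_filter] at hu
    obtain ⟨hu, s, h1, h2, h3⟩ := hu
    have := blue s h1 (by
      rw [h2]; intro v hv
      rcases Sym2.mem_iff.1 hv with rfl | rfl <;> assumption)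
    rw [h3] at this
    exact absurd this (by simp)
  have hRΔ : ∀ w, ((R w).card : ℝ) ≤ Δ := by
    intro w
    refine le_trans ?_ (T3 w)
    norm_cast
    have : ∀ u ∈ R w, ∃ s, s < N ∧ e s = s(u, w) ∧ c s = true := fun u hu =>
      (Finset.mem_filter.1 hu).2
    choose! f hf using this
    apply Finset.card_le_card_of_injOn f
    · intro u hu
      obtain ⟨h1, h2, h3⟩ := hf u hu
      simp only [Finset.coe_filter, Finset.mem_range, Set.mem_ofPred_eq]
      exact ⟨h1, h3, by rw [h2]; simp⟩
    · intro u hu v hv huv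
      have h1 := (hf u hu).2.1
      have h2 := (hf v hv).2.1
      rw [huv, h2] at h1
      have := Sym2.eq_iff.1 h1
      rcases this with h | h
      · exact h.1.symm
      · exact h.2.symm.trans h.1.symm
  -- few red edges between `S` and any set of at most `n` vertices
  have hcross : ∀ W : Finset ℕ, W.card ≤ n → ((∑ w ∈ W, (R w).card : ℕ) : ℝ) < n * κ := by
    intro W hW
    refine lt_of_le_of_lt ?_ (T2 (S ∪ W) ?_)
    · norm_cast
      rw [← Finset.card_sigma]
      have : ∀ p ∈ W.sigma R, ∃ s, s < N ∧ e s = s(p.2, p.1) ∧ c s = true := by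
        intro p hp
        exact (Finset.mem_filter.1 (Finset.mem_sigma.1 hp).2).2
      choose! f hf using this
      apply Finset.card_le_card_of_injOn f
      · intro p hp
        obtain ⟨h1, h2, h3⟩ := hf p hp
        have hp' := Finset.mem_sigma.1 hp
        simp only [Finset.coe_filter, Finset.mem_range, Set.mem_ofPred_eq]
        refine ⟨h1, h3, ?_⟩
        rw [h2]
        intro v hv
        rcases Sym2.mem_iff.1 hv with rfl | rfl
        · exact Finset.mem_union_left _ (Finset.mem_filter.1 hp'.2).1
        · exact Finset.mem_union_right _ hp'.1
      · intro p hp q hq hpq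
        have h1 := (hf p hp).2.1
        have h2 := (hf q hq).2.1
        have hp' := (Finset.mem_sigma.1 hp).2
        have hq' := (Finset.mem_sigma.1 hq).2
        rw [hpq, h2] at h1
        rcases Sym2.eq_iff.1 h1 with h | h
        · exact Sigma.ext h.2.symm (heq_of_eq h.1.symm)
        · exfalso
          apply hRS _ _ hp'
          rw [← h.1]
          exact (Finset.mem_filter.1 hq').1
    · have := Finset.card_union_le S W
      omega
  let H := heavy e N d
  let W := H.filter (fun w => κ ≤ (R w).card)
  have hW : W.card < n := by
    by_contra hcon
    push Not at hcon
    obtain ⟨W', hW', hc⟩ := Finset.exists_subset_card_eq hcon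
    have h1 := hcross W' hc.le
    have h2 : (n : ℝ) * κ ≤ ((∑ w ∈ W', (R w).card : ℕ) : ℝ) := by
      rw [← hc, ← nsmul_eq_mul]
      push_cast
      exact Finset.card_nsmul_le_sum _ _ _ (fun w hw => (Finset.mem_filter.1 (hW' hw)).2)
    linarith
  have hsq : ((∑ w ∈ H, (R w).card * (R w).card : ℕ) : ℝ) ≤
      Δ * (n * κ) + (heavy e N d).card * κ ^ 2 := by
    push_cast
    rw [← Finset.sum_filter_add_sum_filter_not H (fun w => κ ≤ (R w).card)]
    apply add_le_add
    · calc ∑ w ∈ W, ((R w).card : ℝ) * (R w).card ≤ ∑ w ∈ W, Δ * (R w).card := by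
            apply Finset.sum_le_sum
            intro w _
            exact mul_le_mul_of_nonneg_right (hRΔ w) (by positivity)
        _ = Δ * ∑ w ∈ W, ((R w).card : ℝ) := by rw [Finset.mul_sum]
        _ ≤ Δ * (n * κ) := by
            apply mul_le_mul_of_nonneg_left _ hΔ
            have := hcross W hW.le
            push_cast at this
            exact this.le
    · calc ∑ w ∈ H with ¬ κ ≤ ((R w).card : ℝ), ((R w).card : ℝ) * (R w).card
          ≤ ∑ w ∈ H with ¬ κ ≤ ((R w).card : ℝ), κ ^ 2 := by
            apply Finset.sum_le_sum
            intro w hw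
            have := (Finset.mem_filter.1 hw).2
            push Not at this
            rw [sq]
            exact mul_le_mul this.le this.le (by positivity) hκ
        _ ≤ ∑ w ∈ H, κ ^ 2 := by
            apply Finset.sum_le_sum_of_subset_of_nonneg (Finset.filter_subset _ _)
            intros; positivity
        _ = _ := by simp [H]
  -- all turns inside `S`
  let E := (Finset.range N).filter (fun t => ∀ v ∈ e t, v ∈ S)
  have hE : n.choose 2 ≤ E.card := by
    rw [← hS, ← Sym2.card_image_offDiag]
    have hsub : S.offDiag.image Sym2.mk.uncurry ⊆ E.image e := by
      intro z hz
      obtain ⟨⟨u, v⟩, huv, rfl⟩ := Finset.mem_image.1 hz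
      rw [Finset.mem_offDiag] at huv
      obtain ⟨t, h1, h2, _⟩ := hb u huv.1 v huv.2.1 huv.2.2
      refine Finset.mem_image.2 ⟨t, Finset.mem_filter.2 ⟨Finset.mem_range.2 h1, ?_⟩, h2⟩
      rw [h2]
      intro x hx
      rcases Sym2.mem_iff.1 hx with rfl | rfl
      · exact huv.1
      · exact huv.2.1
    exact (Finset.card_le_card hsub).trans Finset.card_image_le
  let F := S.biUnion (fun v => (Finset.range N).filter (fun t => v ∈ e t ∧ deg e t v < d))
  have hF : F.card ≤ n * d := by
    rw [← hS]
    exact Finset.card_biUnion_le_card_mul _ _ _ (fun v _ => light_card e N d v)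
  let C := E.filter (fun t => Closing e c t)
  have hC : C.card ≤ ∑ w ∈ H, (R w).card * (R w).card := by
    have : ∀ t ∈ C, ∃ q : Σ _ : ℕ, ℕ × ℕ, q ∈ H.sigma (fun w => R w ×ˢ R w) ∧
        e t = s(q.2.1, q.2.2) := by
      intro t ht
      obtain ⟨h1, u, v, w, h2, h3, h4⟩ := Finset.mem_filter.1 ht
      obtain ⟨h5, h6⟩ := Finset.mem_filter.1 h1
      have h5 := Finset.mem_range.1 h5
      have r3 : Red e c N u w := by
        obtain ⟨s, a, b⟩ := h3
        exact ⟨s, a.trans h5, b⟩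
      have r4 : Red e c N v w := by
        obtain ⟨s, a, b⟩ := h4
        exact ⟨s, a.trans h5, b⟩
      rw [h2] at h6
      refine ⟨⟨w, (u, v)⟩, ?_, h2⟩
      refine Finset.mem_sigma.2 ⟨(mem_heavy hd).2 (red_heavy hred r3), ?_⟩
      exact Finset.mem_product.2 ⟨Finset.mem_filter.2 ⟨h6 u (by simp), r3⟩,
        Finset.mem_filter.2 ⟨h6 v (by simp), r4⟩⟩
    choose! f hf using this
    calc C.card ≤ (H.sigma (fun w => R w ×ˢ R w)).card := by
          apply Finset.card_le_card_of_injOn f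
          · intro t ht
            exact (hf t ht).1
          · intro t ht t' ht' h
            apply hinj
            rw [(hf t ht).2, (hf t' ht').2, h]
      _ = _ := by
          rw [Finset.card_sigma]
          simp only [Finset.card_product]
  let G := (Finset.range N).filter (fun t => Flip d e c t ∧ ∀ v ∈ e t, v ∈ S)
  have hG : (G.card : ℝ) < K := T1 S hS touched blue
  have hcov : E ⊆ F ∪ C ∪ G := by
    intro t ht
    obtain ⟨h1, h2⟩ := Finset.mem_filter.1 ht
    by_cases hl : ∀ v ∈ e t, d ≤ deg e t v
    · by_cases hc : Closing e c t
      · exact Finset.mem_union_left _ (Finset.mem_union_right _ (Finset.mem_filter.2 ⟨ht, hc⟩))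
      · exact Finset.mem_union_right _ (Finset.mem_filter.2 ⟨h1, ⟨hl, hc⟩, h2⟩)
    · push Not at hl
      obtain ⟨v, hv, hl⟩ := hl
      exact Finset.mem_union_left _ (Finset.mem_union_left _ (Finset.mem_biUnion.2
        ⟨v, h2 v hv, Finset.mem_filter.2 ⟨h1, hv, hl⟩⟩))
  have h1 : n.choose 2 ≤ n * d + (∑ w ∈ H, (R w).card * (R w).card) + G.card := by
    calc n.choose 2 ≤ E.card := hE
      _ ≤ (F ∪ C ∪ G).card := Finset.card_le_card hcov
      _ ≤ (F ∪ C).card + G.card := Finset.card_union_le _ _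
      _ ≤ F.card + C.card + G.card := by
          gcongr
          exact Finset.card_union_le _ _
      _ ≤ _ := by omega
  have h2 : ((n.choose 2 : ℕ) : ℝ) ≤
      (n : ℝ) * d + ((∑ w ∈ H, (R w).card * (R w).card : ℕ) : ℝ) + G.card := by
    exact_mod_cast h1
  linarith

/-! ### Derandomization -/

lemma histOf_length (P : List Bool → Bool) (t : ℕ) : (histOf P t).length = t := by
  induction t with
  | zero => rfl
  | succ t ih => simp [histOf, ih]

lemma histOf_take (P : List Bool → Bool) {s t : ℕ} (h : s ≤ t) :
    (histOf P t).take s = histOf P s := by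
  induction t with
  | zero =>
    obtain rfl : s = 0 := by omega
    rfl
  | succ t ih =>
    rcases Nat.lt_or_ge t s with h' | h'
    · obtain rfl : s = t + 1 := by omega
      apply List.take_of_length_le
      rw [histOf_length]
    · rw [histOf, List.take_append_of_le_length (by rw [histOf_length]; exact h')]
      exact ih h'

lemma histOf_getD (P : List Bool → Bool) {s t : ℕ} (h : s < t) :
    (histOf P t).getD s false = P (histOf P s) := by
  have h1 : (histOf P t).take (s + 1) = histOf P (s + 1) := histOf_take P h
  have h2 : ((histOf P t).take (s + 1)).getD s false = (histOf P t).getD s false := by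
    simp [List.getD_eq_getElem?_getD]
  rw [← h2, h1, histOf, List.getD_append_right _ _ _ _ (by rw [histOf_length])]
  simp [histOf_length]

/-- Painter can keep a nonnegative combination of supermartingales from growing. -/
lemma derand {ι : Type} [Fintype ι] (p : ℝ) (hp0 : 0 ≤ p) (hp1 : p ≤ 1)
    (g : ι → List Bool → Bool → ℝ) (hg0 : ∀ i h b, 0 ≤ g i h b)
    (flip : List Bool → Prop)
    (hg : ∀ i h, p * g i h true + (1 - p) * g i h false ≤ 1)
    (hfl : ∀ i h, ¬ flip h → g i h false ≤ 1)
    (w : ι → ℝ) (hw : ∀ i, 0 ≤ w i) :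
    ∃ P : List Bool → Bool, (∀ h, P h = true → flip h) ∧
      ∀ t, ∑ i, w i * ∏ s ∈ Finset.range t, g i (histOf P s) (P (histOf P s)) ≤ ∑ i, w i := by
  let Φ : ι → List Bool → ℝ := fun i h =>
    ∏ s ∈ Finset.range h.length, g i (h.take s) (h.getD s false)
  have hΦ0 : ∀ i h, 0 ≤ Φ i h := fun i h => Finset.prod_nonneg (fun s _ => hg0 _ _ _)
  let P : List Bool → Bool := fun h =>
    decide (flip h ∧ ∑ i, w i * (Φ i h * g i h true) ≤ ∑ i, w i * Φ i h)
  have hstep : ∀ h, ∑ i, w i * (Φ i h * g i h (P h)) ≤ ∑ i, w i * Φ i h := by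
    intro h
    by_cases hf : flip h
    · by_cases h1 : ∑ i, w i * (Φ i h * g i h true) ≤ ∑ i, w i * Φ i h
      · have : P h = true := by simp [P, hf, h1]
        rw [this]; exact h1
      · have : P h = false := by simp only [P, hf, h1]; simp
        rw [this]
        by_contra h0
        push Not at h1 h0
        have hcomb : p * ∑ i, w i * (Φ i h * g i h true) +
            (1 - p) * ∑ i, w i * (Φ i h * g i h false) ≤ ∑ i, w i * Φ i h := by
          rw [Finset.mul_sum, Finset.mul_sum, ← Finset.sum_add_distrib]
          apply Finset.sum_le_sum
          intro i _
          have := mul_le_mul_of_nonneg_left (hg i h) (mul_nonneg (hw i) (hΦ0 i h))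
          nlinarith
        rcases hp0.eq_or_lt with h | h
        · subst h; linarith
        · nlinarith
    · have : P h = false := by simp [P, hf]
      rw [this]
      apply Finset.sum_le_sum
      intro i _
      apply mul_le_mul_of_nonneg_left _ (hw i)
      exact mul_le_of_le_one_right (hΦ0 i h) (hfl i h hf)
  refine ⟨P, fun h hP => ?_, ?_⟩
  · simp only [P, decide_eq_true_eq] at hP
    exact hP.1
  · have hprod : ∀ t i, Φ i (histOf P t) =
        ∏ s ∈ Finset.range t, g i (histOf P s) (P (histOf P s)) := by
      intro t i
      simp only [Φ, histOf_length]
      apply Finset.prod_congr rfl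
      intro s hs
      have hs := Finset.mem_range.1 hs
      rw [histOf_take P hs.le, histOf_getD P hs]
    intro t
    induction t with
    | zero => simp
    | succ t ih =>
      refine le_trans ?_ ih
      have := hstep (histOf P t)
      simp only [hprod] at this
      simpa only [Finset.prod_range_succ] using this

/-- multiplier of a single test -/
noncomputable def mult (p lam : ℝ) (A : Prop) (b : Bool) : ℝ :=
  if A then (if b = true then lam else 1) / (1 + (lam - 1) * p) else 1

lemma mult_nonneg {p lam : ℝ} (hlam : 0 ≤ lam) (hD : 0 < 1 + (lam - 1) * p) (A : Prop) (b : Bool) :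
    0 ≤ mult p lam A b := by
  unfold mult
  split_ifs <;> positivity

lemma mult_avg {p lam : ℝ} (hD : 0 < 1 + (lam - 1) * p) (A : Prop) :
    p * mult p lam A true + (1 - p) * mult p lam A false ≤ 1 := by
  unfold mult
  by_cases hA : A
  · rw [if_pos hA, if_pos hA, if_pos rfl, if_neg (by simp)]
    apply le_of_eq
    rw [mul_div_assoc', mul_div_assoc', ← add_div, div_eq_one_iff_eq hD.ne']
    ring
  · rw [if_neg hA, if_neg hA]
    linarith

lemma mult_false_of_not {p lam : ℝ} {A : Prop} (b : Bool) (h : ¬ A) : mult p lam A b = 1 := by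
  simp [mult, h]

lemma mult_prod (p lam : ℝ) (N : ℕ) (A : ℕ → Prop) (c : ℕ → Bool) :
    ∏ s ∈ Finset.range N, mult p lam (A s) (c s) =
      lam ^ ((Finset.range N).filter (fun t => A t ∧ c t = true)).card /
        (1 + (lam - 1) * p) ^ ((Finset.range N).filter (fun t => A t)).card := by
  induction N with
  | zero => simp
  | succ N ih =>
    rw [Finset.prod_range_succ, ih, Finset.range_add_one, Finset.filter_insert,
      Finset.filter_insert]
    by_cases hA : A N
    · by_cases hc : c N = true
      · simp only [mult, hA, hc, if_true, and_self]
        rw [Finset.card_insert_of_notMem (by simp), Finset.card_insert_of_notMem (by simp),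
          pow_succ, pow_succ, div_mul_div_comm]
      · have hc' : ¬ (A N ∧ c N = true) := fun h => hc h.2
        rw [mult, if_pos hA, if_neg hc, if_pos hA, if_neg hc']
        rw [Finset.card_insert_of_notMem (by simp), pow_succ, div_mul_div_comm, mul_one]
    · simp [mult, hA]

/-! ### Labels -/

/-- the vertex carrying a label (turn, side) -/
noncomputable def vert {N : ℕ} (e : ℕ → Sym2 ℕ) (l : Fin N × Bool) : ℕ :=
  if l.2 = true then (e l.1).out.1 else (e l.1).out.2

/-- the edge of turn `t` lies inside the set of vertices labelled by `f` -/
def Inside {N k : ℕ} (e : ℕ → Sym2 ℕ) (f : Fin k → Fin N × Bool) (t : ℕ) : Prop :=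
  ∀ v ∈ e t, ∃ i, ((f i).1 : ℕ) ≤ t ∧ vert e (f i) = v

/-- the edge of turn `t` contains the vertex labelled by `l` -/
def Touch {N : ℕ} (e : ℕ → Sym2 ℕ) (l : Fin N × Bool) (t : ℕ) : Prop :=
  (l.1 : ℕ) ≤ t ∧ vert e l ∈ e t

lemma vert_congr {N : ℕ} {e e' : ℕ → Sym2 ℕ} {t : ℕ} (he : ∀ s ≤ t, e s = e' s)
    {l : Fin N × Bool} (hl : (l.1 : ℕ) ≤ t) : vert e l = vert e' l := by
  unfold vert
  rw [he _ hl]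

lemma Inside.congr {N k : ℕ} {e e' : ℕ → Sym2 ℕ} {t : ℕ} (he : ∀ s ≤ t, e s = e' s)
    {f : Fin k → Fin N × Bool} (h : Inside e f t) : Inside e' f t := by
  intro v hv
  rw [← he t le_rfl] at hv
  obtain ⟨i, h1, h2⟩ := h v hv
  exact ⟨i, h1, by rw [← vert_congr he h1]; exact h2⟩

lemma Touch.congr {N : ℕ} {e e' : ℕ → Sym2 ℕ} {t : ℕ} (he : ∀ s ≤ t, e s = e' s)
    {l : Fin N × Bool} (h : Touch e l t) : Touch e' l t := by
  refine ⟨h.1, ?_⟩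
  rw [← he t le_rfl, ← vert_congr he h.1]
  exact h.2

lemma Red.congr {e e' : ℕ → Sym2 ℕ} {c c' : ℕ → Bool} {t : ℕ} (he : ∀ s ≤ t, e s = e' s)
    (hc : ∀ s < t, c s = c' s) {u v : ℕ} (h : Red e c t u v) : Red e' c' t u v := by
  obtain ⟨s, h1, h2, h3⟩ := h
  exact ⟨s, h1, by rw [← he s h1.le]; exact h2, by rw [← hc s h1]; exact h3⟩

lemma Flip.congr {d : ℕ} {e e' : ℕ → Sym2 ℕ} {c c' : ℕ → Bool} {t : ℕ}
    (he : ∀ s ≤ t, e s = e' s)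
    (hc : ∀ s < t, c s = c' s) (h : Flip d e c t) : Flip d e' c' t := by
  refine ⟨?_, ?_⟩
  · intro v hv
    rw [← he t le_rfl] at hv
    have := h.1 v hv
    convert this using 1
    unfold deg
    congr 1
    apply Finset.filter_congr
    intro s hs
    rw [he s (Finset.mem_range.1 hs).le]
  · rintro ⟨u, v, w, h1, h2, h3⟩
    apply h.2
    have he' : ∀ s ≤ t, e' s = e s := fun s hs => (he s hs).symm
    have hc' : ∀ s < t, c' s = c s := fun s hs => (hc s hs).symm
    exact ⟨u, v, w, by rw [he t le_rfl]; exact h1, h2.congr he' hc', h3.congr he' hc'⟩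

/-- Painter's strategy, at the level of labels. -/
lemma painter (B : List Bool → Sym2 ℕ) (N n d : ℕ) (p : ℝ) (hp0 : 0 < p) (hp1 : p < 1)
    (w1 w2 w3 : ℝ) (h1 : 0 ≤ w1) (h2 : 0 ≤ w2) (h3 : 0 ≤ w3)
    (hw : (2 * N : ℝ) ^ n * w1 + (2 * N : ℝ) ^ (2 * n) * w2 + (2 * N : ℝ) * w3 < 1) :
    ∃ (P : List Bool → Bool) (e : ℕ → Sym2 ℕ) (c : ℕ → Bool),
      (e = fun t => B (histOf P t)) ∧ (c = fun t => P (histOf P t)) ∧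
      (∀ t, c t = true → Flip d e c t) ∧
      (∀ f : Fin n → Fin N × Bool, w1 *
        ((0 : ℝ) ^ ((Finset.range N).filter
          (fun t => (Flip d e c t ∧ Inside e f t) ∧ c t = true)).card /
        (1 - p) ^ ((Finset.range N).filter (fun t => Flip d e c t ∧ Inside e f t)).card) < 1) ∧
      (∀ f : Fin (2 * n) → Fin N × Bool, w2 *
        ((2 : ℝ) ^ ((Finset.range N).filter
          (fun t => (Flip d e c t ∧ Inside e f t) ∧ c t = true)).card /
        (1 + p) ^ ((Finset.range N).filter (fun t => Flip d e c t ∧ Inside e f t)).card) < 1) ∧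
      (∀ l : Fin N × Bool, w3 *
        ((2 : ℝ) ^ ((Finset.range N).filter
          (fun t => (Flip d e c t ∧ Touch e l t) ∧ c t = true)).card /
        (1 + p) ^ ((Finset.range N).filter (fun t => Flip d e c t ∧ Touch e l t)).card) < 1) := by
  let eH : List Bool → ℕ → Sym2 ℕ := fun h s => B (h.take s)
  let cH : List Bool → ℕ → Bool := fun h s => h.getD s false
  let fl : List Bool → Prop := fun h => Flip d (eH h) (cH h) h.length
  let ι := (Fin n → Fin N × Bool) ⊕ (Fin (2 * n) → Fin N × Bool) ⊕ (Fin N × Bool)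
  let Ev : ι → List Bool → Prop := fun i h => match i with
    | .inl f => fl h ∧ Inside (eH h) f h.length
    | .inr (.inl f) => fl h ∧ Inside (eH h) f h.length
    | .inr (.inr l) => fl h ∧ Touch (eH h) l h.length
  let lam : ι → ℝ := fun i => match i with
    | .inl _ => 0
    | .inr _ => 2
  let w : ι → ℝ := fun i => match i with
    | .inl _ => w1
    | .inr (.inl _) => w2
    | .inr (.inr _) => w3
  have hlam : ∀ i, 0 ≤ lam i := by
    rintro (f | f) <;> simp [lam]
  have hD : ∀ i, 0 < 1 + (lam i - 1) * p := by
    rintro (f | f) <;> simp only [lam] <;> linarith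
  have hEv : ∀ i h, Ev i h → fl h := by
    rintro (f | f | f) h hh <;> exact hh.1
  have hw0 : ∀ i, 0 ≤ w i := by
    rintro (f | f | f) <;> simp only [w] <;> assumption
  obtain ⟨P, hP1, hP2⟩ := derand p hp0.le hp1.le (fun i h b => mult p (lam i) (Ev i h) b)
    (fun i h b => mult_nonneg (hlam i) (hD i) _ _) fl (fun i h => mult_avg (hD i) _)
    (fun i h hh => (mult_false_of_not false (fun hc => hh (hEv i h hc))).le) w hw0
  have hsum : ∑ i, w i < 1 := by
    refine lt_of_eq_of_lt ?_ hw
    rw [Fintype.sum_sum_type, Fintype.sum_sum_type]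
    simp only [w, Finset.sum_const, Finset.card_univ, nsmul_eq_mul]
    simp [mul_comm]
    ring
  have hone : ∀ i, w i * ∏ s ∈ Finset.range N,
      mult p (lam i) (Ev i (histOf P s)) (P (histOf P s)) < 1 := by
    intro i
    refine lt_of_le_of_lt ?_ (lt_of_le_of_lt (hP2 N) hsum)
    exact Finset.single_le_sum (f := fun i => w i * ∏ s ∈ Finset.range N,
      mult p (lam i) (Ev i (histOf P s)) (P (histOf P s)))
      (fun j _ => mul_nonneg (hw0 j) (Finset.prod_nonneg
        (fun s _ => mult_nonneg (hlam j) (hD j) _ _))) (Finset.mem_univ i)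
  have ce : ∀ t, ∀ s ≤ t, eH (histOf P t) s = B (histOf P s) := by
    intro t s hs
    simp only [eH, histOf_take P hs]
  have cc : ∀ t, ∀ s < t, cH (histOf P t) s = P (histOf P s) := by
    intro t s hs
    simp only [cH, histOf_getD P hs]
  have hfl : ∀ t, fl (histOf P t) ↔
      Flip d (fun t => B (histOf P t)) (fun t => P (histOf P t)) t := by
    intro t
    simp only [fl, histOf_length]
    exact ⟨fun h => h.congr (ce t) (cc t), fun h => h.congr (fun s hs => (ce t s hs).symm)
      (fun s hs => (cc t s hs).symm)⟩
  have hin : ∀ {k : ℕ} (f : Fin k → Fin N × Bool) (t : ℕ),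
      Inside (eH (histOf P t)) f (histOf P t).length ↔ Inside (fun t => B (histOf P t)) f t := by
    intro k f t
    simp only [histOf_length]
    exact ⟨fun h => h.congr (ce t), fun h => h.congr (fun s hs => (ce t s hs).symm)⟩
  have hto : ∀ (l : Fin N × Bool) (t : ℕ),
      Touch (eH (histOf P t)) l (histOf P t).length ↔ Touch (fun t => B (histOf P t)) l t := by
    intro l t
    simp only [histOf_length]
    exact ⟨fun h => h.congr (ce t), fun h => h.congr (fun s hs => (ce t s hs).symm)⟩
  refine ⟨P, _, _, rfl, rfl, ?_, ?_, ?_, ?_⟩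
  · intro t ht
    exact (hfl t).1 (hP1 _ ht)
  · intro f
    have := hone (.inl f)
    simp only [w, lam, Ev, hfl, hin] at this
    rw [mult_prod, show (1 : ℝ) + (0 - 1) * p = 1 - p by ring] at this
    convert this
  · intro f
    have := hone (.inr (.inl f))
    simp only [w, lam, Ev, hfl, hin] at this
    rw [mult_prod, show (1 : ℝ) + (2 - 1) * p = 1 + p by ring] at this
    convert this
  · intro l
    have := hone (.inr (.inr l))
    simp only [w, lam, Ev, hfl, hto] at this
    rw [mult_prod, show (1 : ℝ) + (2 - 1) * p = 1 + p by ring] at this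
    convert this

/-! ### Finite Ramsey, so that the online Ramsey number is not a junk value -/

lemma ramsey3 (r : ℕ → ℕ → Prop) (hs : ∀ u v, r u v → r v u) (n : ℕ) :
    ∀ V : Finset ℕ, n * n ≤ V.card →
      (∃ x ∈ V, ∃ y ∈ V, ∃ z ∈ V, x ≠ y ∧ x ≠ z ∧ y ≠ z ∧ r x y ∧ r x z ∧ r y z) ∨
      ∃ S ⊆ V, S.card = n ∧ ∀ u ∈ S, ∀ v ∈ S, u ≠ v → ¬ r u v := by
  induction n with
  | zero => intro V _; exact Or.inr ⟨∅, by simp, by simp, by simp⟩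
  | succ n ih =>
    intro V hV
    have hpos : 0 < V.card := by nlinarith
    obtain ⟨x, hx⟩ := Finset.card_pos.1 hpos
    let A := (V.erase x).filter (fun y => r x y)
    let C := (V.erase x).filter (fun y => ¬ r x y)
    have hAC : A.card + C.card = V.card - 1 := by
      rw [← Finset.card_erase_of_mem hx]
      exact Finset.card_filter_add_card_filter_not _
    by_cases hA : n + 1 ≤ A.card
    · by_cases hedge : ∃ y ∈ A, ∃ z ∈ A, y ≠ z ∧ r y z
      · obtain ⟨y, hy, z, hz, hyz, hr⟩ := hedge
        simp only [A, Finset.mem_filter, Finset.mem_erase] at hy hz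
        exact Or.inl ⟨x, hx, y, hy.1.2, z, hz.1.2, hy.1.1.symm, hz.1.1.symm, hyz, hy.2, hz.2, hr⟩
      · push Not at hedge
        obtain ⟨S, hS, hc⟩ := Finset.exists_subset_card_eq hA
        refine Or.inr ⟨S, fun v hv => ?_, hc, fun u hu v hv huv => hedge u (hS hu) v (hS hv) huv⟩
        exact (Finset.mem_erase.1 (Finset.mem_filter.1 (hS hv)).1).2
    · have hC : n * n ≤ C.card := by
        have : (n + 1) * (n + 1) = n * n + 2 * n + 1 := by ring
        omega
      have hCV : C ⊆ V := fun v hv => (Finset.mem_erase.1 (Finset.mem_filter.1 hv).1).2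
      rcases ih C hC with ⟨a, ha, b, hb, z, hz, h⟩ | ⟨S, hS, hc, h⟩
      · exact Or.inl ⟨a, hCV ha, b, hCV hb, z, hCV hz, h⟩
      · have hxS : x ∉ S := by
          intro h'
          have := hS h'
          simp [C] at this
        refine Or.inr ⟨insert x S, ?_, ?_, ?_⟩
        · intro v hv
          rcases Finset.mem_insert.1 hv with rfl | hv
          · exact hx
          · exact hCV (hS hv)
        · rw [Finset.card_insert_of_notMem hxS, hc]
        · intro u hu v hv huv
          rcases Finset.mem_insert.1 hu with hu' | hu' <;>
            rcases Finset.mem_insert.1 hv with hv' | hv'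
          · exact absurd (hu'.trans hv'.symm) huv
          · rw [hu']
            exact (Finset.mem_filter.1 (hS hv')).2
          · intro hr
            rw [hv'] at hr
            exact (Finset.mem_filter.1 (hS hu')).2 (hs _ _ hr)
          · exact h u hu' v hv' huv

lemma builderWins_nonempty (n : ℕ) : ∃ N, BuilderWins 3 n N := by
  have : Infinite {z : Sym2 ℕ // ¬ z.IsDiag} := by
    apply Infinite.of_injective (fun k : ℕ => (⟨s(0, k + 1), by simp⟩ : {z : Sym2 ℕ // ¬ z.IsDiag}))
    intro a b h
    simpa using h
  have : Encodable (Sym2 ℕ) := Encodable.ofCountable _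
  obtain ⟨den⟩ := nonempty_denumerable {z : Sym2 ℕ // ¬ z.IsDiag}
  let φ : ℕ ≃ {z : Sym2 ℕ // ¬ z.IsDiag} := (Denumerable.eqv _).symm
  let V := Finset.range (n * n)
  let idx : Sym2 ℕ → ℕ := fun z => if h : ¬ z.IsDiag then φ.symm ⟨z, h⟩ else 0
  let N := (V ×ˢ V).sup (fun q => idx s(q.1, q.2)) + 1
  have hN : ∀ u ∈ V, ∀ v ∈ V, u ≠ v → ∃ t < N, (φ t : Sym2 ℕ) = s(u, v) := by
    intro u hu v hv huv
    refine ⟨idx s(u, v), ?_, ?_⟩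
    · apply Nat.lt_succ_of_le
      exact Finset.le_sup (f := fun q : ℕ × ℕ => idx s(q.1, q.2))
        (Finset.mk_mem_product hu hv)
    · simp [idx, huv]
  refine ⟨N, fun h => φ h.length, ⟨fun h => (φ h.length).2, ?_⟩, ?_⟩
  · intro h i hi heq
    have := φ.injective (Subtype.ext heq)
    simp at this
    omega
  · intro P
    let r : ℕ → ℕ → Prop := fun u v => ∃ t, t < N ∧ (φ t : Sym2 ℕ) = s(u, v) ∧
      P (histOf P t) = true
    have hs : ∀ u v, r u v → r v u := by
      rintro u v ⟨t, h1, h2, h3⟩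
      exact ⟨t, h1, by rw [h2, Sym2.eq_swap], h3⟩
    simp only [HasMonoClique, histOf_length]
    rcases ramsey3 r hs n V (by simp [V]) with
      ⟨x, hx, y, hy, z, hz, hxy, hxz, hyz, r1, r2, r3⟩ | ⟨S, hS, hc, h⟩
    · left
      refine ⟨{x, y, z}, Finset.card_eq_three.2 ⟨x, y, z, hxy, hxz, hyz, rfl⟩, ?_⟩
      intro u hu v hv huv
      simp only [Finset.mem_insert, Finset.mem_singleton] at hu hv
      rcases hu with rfl | rfl | rfl <;> rcases hv with rfl | rfl | rfl <;>
        first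
        | exact absurd rfl huv
        | assumption
        | (apply hs; assumption)
    · right
      refine ⟨S, hc, ?_⟩
      intro u hu v hv huv
      obtain ⟨t, h1, h2⟩ := hN u (hS hu) v (hS hv) huv
      refine ⟨t, h1, h2, ?_⟩
      have := h u hu v hv huv
      by_contra hcon
      exact this ⟨t, h1, h2, by simpa using hcon⟩

/-! ### Putting everything together -/

lemma exists_label {N : ℕ} (hN : 0 < N) (e : ℕ → Sym2 ℕ) :
    ∃ lab : ℕ → Fin N × Bool, ∀ t < N, ∀ v ∈ e t, ((lab v).1 : ℕ) ≤ t ∧ vert e (lab v) = v := by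
  have : ∀ v, ∃ l : Fin N × Bool, ∀ t < N, v ∈ e t → (l.1 : ℕ) ≤ t ∧ vert e l = v := by
    intro v
    by_cases h : ∃ t, t < N ∧ v ∈ e t
    · have hs := Nat.find_spec h
      have hmin : ∀ t < N, v ∈ e t → Nat.find h ≤ t := fun t h1 h2 => Nat.find_min' h ⟨h1, h2⟩
      have hv : (e (Nat.find h)).out.1 = v ∨ (e (Nat.find h)).out.2 = v := by
        have h2 := hs.2
        have h3 : s((e (Nat.find h)).out.1, (e (Nat.find h)).out.2) = e (Nat.find h) :=
          Quot.out_eq _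
        rw [← h3] at h2
        rcases Sym2.mem_iff.1 h2 with h4 | h4
        · exact Or.inl h4.symm
        · exact Or.inr h4.symm
      rcases hv with hv | hv
      · exact ⟨(⟨Nat.find h, hs.1⟩, true), fun t h1 h2 => ⟨hmin t h1 h2, by simp [vert, hv]⟩⟩
      · exact ⟨(⟨Nat.find h, hs.1⟩, false), fun t h1 h2 => ⟨hmin t h1 h2, by simp [vert, hv]⟩⟩
    · exact ⟨(⟨0, hN⟩, true), fun t h1 h2 => absurd ⟨t, h1, h2⟩ h⟩
  choose lab hlab using this
  exact ⟨lab, fun t ht v hv => hlab v t ht hv⟩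

lemma two_pow_ge (k : ℕ) {x : ℝ} (h : x ≤ k) : Real.exp (x / 2) ≤ 2 ^ k := by
  have h1 : Real.exp (1 / 2) ≤ 2 := by
    have h2 : Real.exp (1 / 2) * Real.exp (1 / 2) = Real.exp 1 := by
      rw [← Real.exp_add]; norm_num
    have h3 := Real.exp_one_lt_d9
    nlinarith [Real.exp_pos (1 / 2)]
  calc Real.exp (x / 2) ≤ Real.exp (k * (1 / 2)) := Real.exp_le_exp.2 (by linarith)
    _ = Real.exp (1 / 2) ^ k := Real.exp_nat_mul _ _
    _ ≤ 2 ^ k := pow_le_pow_left₀ (Real.exp_pos _).le h1 k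

lemma one_add_pow_le {p : ℝ} (hp : 0 ≤ p) (k : ℕ) {x : ℝ} (h : (k : ℝ) ≤ x) :
    (1 + p) ^ k ≤ Real.exp (p * x) := by
  calc (1 + p) ^ k ≤ Real.exp p ^ k :=
        pow_le_pow_left₀ (by linarith) (by linarith [Real.add_one_le_exp p]) k
    _ = Real.exp (k * p) := (Real.exp_nat_mul _ _).symm
    _ ≤ _ := Real.exp_le_exp.2 (by nlinarith)

lemma one_sub_pow_le {p : ℝ} (hp : 0 ≤ p) (hp1 : p ≤ 1) (k : ℕ) {x : ℝ} (h : x ≤ (k : ℝ)) :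
    (1 - p) ^ k ≤ Real.exp (-(p * x)) := by
  calc (1 - p) ^ k ≤ Real.exp (-p) ^ k :=
        pow_le_pow_left₀ (by linarith) (by linarith [Real.add_one_le_exp (-p)]) k
    _ = Real.exp (k * (-p)) := (Real.exp_nat_mul _ _).symm
    _ ≤ _ := Real.exp_le_exp.2 (by nlinarith)

/-- ratio bound used for the two upper-tail tests -/
lemma ratio_ge {p : ℝ} (hp : 0 ≤ p) {a b : ℕ} {x y : ℝ} (ha : x ≤ a) (hb : (b : ℝ) ≤ y) :
    Real.exp (x / 2 - p * y) ≤ 2 ^ a / (1 + p) ^ b := by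
  rw [Real.exp_sub]
  have h1 : 0 < (1 + p) ^ b := by positivity
  exact div_le_div₀ (by positivity) (two_pow_ge a ha) h1 (one_add_pow_le hp b hb)

lemma inside_card {N k : ℕ} (e : ℕ → Sym2 ℕ) (hinj : Function.Injective e)
    (f : Fin k → Fin N × Bool) (Q : ℕ → Prop) :
    ((Finset.range N).filter (fun t => Q t ∧ Inside e f t)).card ≤ k * k := by
  calc _ ≤ ((Finset.univ : Finset (Fin k × Fin k)).image
        (fun q => s(vert e (f q.1), vert e (f q.2)))).card := by
        apply Finset.card_le_card_of_injOn e _ hinj.injOn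
        intro t ht
        have ht := (Finset.mem_filter.1 ht).2.2
        obtain ⟨x, y, hxy⟩ : ∃ x y, e t = s(x, y) :=
          Sym2.ind (f := fun z => ∃ x y, z = s(x, y)) (fun x y => ⟨x, y, rfl⟩) (e t)
        obtain ⟨i, _, hi⟩ := ht x (by rw [hxy]; simp)
        obtain ⟨j, _, hj⟩ := ht y (by rw [hxy]; simp)
        rw [Finset.mem_coe, Finset.mem_image]
        exact ⟨(i, j), Finset.mem_univ _, by rw [hxy, hi, hj]⟩
    _ ≤ (Finset.univ : Finset (Fin k × Fin k)).card := Finset.card_image_le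
    _ = k * k := by simp

lemma touch_card {N d : ℕ} (hd : 1 ≤ d) (e : ℕ → Sym2 ℕ) (c : ℕ → Bool)
    (hinj : Function.Injective e) (l : Fin N × Bool) :
    ((Finset.range N).filter (fun t => Flip d e c t ∧ Touch e l t)).card ≤
      (heavy e N d).card := by
  have : ∀ t ∈ (Finset.range N).filter (fun t => Flip d e c t ∧ Touch e l t),
      ∃ w, w ∈ heavy e N d ∧ e t = s(vert e l, w) := by
    intro t ht
    obtain ⟨h1, h2, h3⟩ := Finset.mem_filter.1 ht
    obtain ⟨w, hw⟩ := h3.2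
    refine ⟨w, (mem_heavy hd).2 ?_, hw⟩
    exact (h2.1 w (by rw [hw]; simp)).trans (deg_mono e w (Finset.mem_range.1 h1).le)
  choose! f hf using this
  apply Finset.card_le_card_of_injOn f
  · intro t ht
    exact (hf t ht).1
  · intro t ht t' ht' h
    apply hinj
    rw [(hf t ht).2, (hf t' ht').2, h]

lemma run_injective {B : List Bool → Sym2 ℕ} (hB : ValidBuilder B) (P : List Bool → Bool) :
    Function.Injective (fun t => B (histOf P t)) := by
  have key : ∀ s t, s < t → B (histOf P s) ≠ B (histOf P t) := by
    intro s t h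
    have := hB.2 (histOf P t) s (by rw [histOf_length]; exact h)
    rwa [histOf_take P h.le] at this
  intro s t h
  rcases lt_trichotomy s t with h' | h' | h'
  · exact absurd h (key s t h')
  · exact h'
  · exact absurd h.symm (key t s h')

lemma not_builderWins {n N : ℕ} {L : ℝ} (hn : 16 ≤ n) (hL : 1 ≤ L) (hLn : 32 * L < n)
    (hexp : Real.exp L = n) (hbig : 5 * L ^ 2 ≤ n / 100000)
    (hN : (N : ℝ) < (1 / 100000000) * n ^ 3 / L ^ 2) : ¬ BuilderWins 3 n N := by
  rintro ⟨B, hB, hwin⟩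
  have hn0 : (0 : ℝ) < n := by positivity
  have hn16 : (16 : ℝ) ≤ n := by exact_mod_cast hn
  have hL0 : 0 < L := by linarith
  rcases Nat.eq_zero_or_pos N with rfl | hNpos
  · rcases hwin (fun _ => false) with ⟨S, hS, h⟩ | ⟨S, hS, h⟩
    · obtain ⟨u, hu, v, hv, huv⟩ := Finset.one_lt_card.1 (by omega : 1 < S.card)
      obtain ⟨t, ht, _⟩ := h u hu v hv huv
      omega
    · obtain ⟨u, hu, v, hv, huv⟩ := Finset.one_lt_card.1 (by omega : 1 < S.card)
      obtain ⟨t, ht, _⟩ := h u hu v hv huv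
      omega
  set p : ℝ := 32 * L / n with hp
  have hp0 : 0 < p := by positivity
  have hp1 : p < 1 := by rw [hp, div_lt_one hn0]; exact hLn
  set d := n / 8 with hd
  have hd1 : 1 ≤ d := by omega
  have hdn : (d : ℝ) ≤ n / 8 := by
    have : d * 8 ≤ n := Nat.div_mul_le_self n 8
    have : (d : ℝ) * 8 ≤ n := by exact_mod_cast this
    linarith
  have hdn' : (n : ℝ) / 16 ≤ d := by
    have : n ≤ 16 * d := by omega
    have : (n : ℝ) ≤ 16 * d := by exact_mod_cast this
    linarith
  set X : ℝ := n / L with hX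
  have hX0 : 0 < X := by positivity
  have h2N : 2 * (N : ℝ) ≤ Real.exp (3 * L) := by
    have h1 : Real.exp (3 * L) = (n : ℝ) ^ 3 := by
      rw [← hexp, ← Real.exp_nat_mul]; norm_num
    have h2 : (1 / 100000000) * (n : ℝ) ^ 3 / L ^ 2 ≤ (1 / 100000000) * (n : ℝ) ^ 3 :=
      div_le_self (by positivity) (by nlinarith)
    have h3 : (0 : ℝ) ≤ (n : ℝ) ^ 3 := by positivity
    rw [h1]
    linarith
  have hNX : (N : ℝ) ≤ (1 / 100000000) * n * X ^ 2 := by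
    refine hN.le.trans (le_of_eq ?_)
    rw [hX]; field_simp
  have hLX : 5 * L ≤ X / 100000 := by
    rw [hX, div_div, le_div_iff₀ (by positivity)]
    rw [le_div_iff₀ (by positivity)] at hbig
    nlinarith
  -- the weights
  have hw : (2 * N : ℝ) ^ n * Real.exp (-(4 * n * L)) +
      (2 * N : ℝ) ^ (2 * n) * Real.exp (-(7 * n * L)) +
      (2 * N : ℝ) * Real.exp (-(1024 / 100000000 * X)) < 1 := by
    have hnL : 2 ≤ n * L := by nlinarith
    have e2 : Real.exp (-2) < 1 / 3 := by
      rw [Real.exp_neg, inv_lt_comm₀ (Real.exp_pos _) (by norm_num)]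
      have := Real.add_one_lt_exp (x := (2 : ℝ)) (by norm_num)
      norm_num at this ⊢
      linarith
    have a1 : (2 * N : ℝ) ^ n * Real.exp (-(4 * n * L)) ≤ Real.exp (-2) := by
      calc (2 * N : ℝ) ^ n * Real.exp (-(4 * n * L))
          ≤ Real.exp (3 * L) ^ n * Real.exp (-(4 * n * L)) := by gcongr
        _ = Real.exp (n * (3 * L) + -(4 * n * L)) := by rw [← Real.exp_nat_mul, Real.exp_add]
        _ ≤ _ := Real.exp_le_exp.2 (by linarith)
    have a2 : (2 * N : ℝ) ^ (2 * n) * Real.exp (-(7 * n * L)) ≤ Real.exp (-2) := by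
      calc (2 * N : ℝ) ^ (2 * n) * Real.exp (-(7 * n * L))
          ≤ Real.exp (3 * L) ^ (2 * n) * Real.exp (-(7 * n * L)) := by gcongr
        _ = Real.exp (((2 * n : ℕ) : ℝ) * (3 * L) + -(7 * n * L)) := by
            rw [← Real.exp_nat_mul, Real.exp_add]
        _ ≤ _ := Real.exp_le_exp.2 (by push_cast; linarith)
    have a3 : (2 * N : ℝ) * Real.exp (-(1024 / 100000000 * X)) ≤ Real.exp (-2) := by
      calc (2 * N : ℝ) * Real.exp (-(1024 / 100000000 * X))
          ≤ Real.exp (3 * L) * Real.exp (-(1024 / 100000000 * X)) := by gcongr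
        _ = Real.exp (3 * L + -(1024 / 100000000 * X)) := by rw [Real.exp_add]
        _ ≤ _ := Real.exp_le_exp.2 (by linarith)
    linarith
  obtain ⟨P, e, c, he, hc, hflip, t1, t2, t3⟩ := painter B N n d p hp0 hp1 _ _ _
    (Real.exp_pos _).le (Real.exp_pos _).le (Real.exp_pos _).le hw
  have hinj : Function.Injective e := he ▸ run_injective hB P
  have hdiag : ∀ t, ¬ (e t).IsDiag := by
    intro t; rw [he]; exact hB.1 _
  have hred : ∀ t < N, c t = true → Flip d e c t := fun t _ => hflip t
  obtain ⟨lab, hlab⟩ := exists_label hNpos e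
  have hM : ((heavy e N d).card : ℝ) ≤ 32 / 100000000 * X ^ 2 := by
    have h1 := heavy_card e N d
    have h1 : ((heavy e N d).card : ℝ) * d ≤ 2 * N := by exact_mod_cast h1
    have h2 : ((heavy e N d).card : ℝ) * (n / 16) ≤ 2 * N :=
      le_trans (mul_le_mul_of_nonneg_left hdn' (by positivity)) h1
    have h3 : ((heavy e N d).card : ℝ) * n ≤ (32 / 100000000 * X ^ 2) * n := by
      nlinarith
    exact le_of_mul_le_mul_right h3 hn0
  have hpn : p * n = 32 * L := by rw [hp]; field_simp
  have hXL : X * L = n := by rw [hX]; field_simp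
  have hpX : p * X = 32 := by rw [hp, hX]; field_simp
  have hwin := hwin P
  have hwin : HasMonoClique e c N 3 true ∨ HasMonoClique e c N n false := by
    rw [he, hc]; exact hwin
  rcases hwin with ⟨S, hS, h⟩ | ⟨S, hS, h⟩
  · obtain ⟨x, y, z, hxy, hxz, hyz, rfl⟩ := Finset.card_eq_three.1 hS
    exact no_triangle hred hxy hxz hyz (h x (by simp) y (by simp) hxy)
      (h y (by simp) z (by simp) hyz) (h x (by simp) z (by simp) hxz)
  · refine no_blue (Δ := 4096 / 100000000 * X) (κ := 270 * L) (K := (n : ℝ) ^ 2 / 8) hd1 hinj hdiag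
      hred (by positivity) ?_ ?_ ?_ (by omega) ?_ S hS h
    · intro S hS htouch hblue
      by_contra hcon
      push Not at hcon
      let g : Fin n ≃ S := (Finset.equivFinOfCardEq hS).symm
      let f : Fin n → Fin N × Bool := fun i => lab (g i)
      have hv : ∀ i, vert e (f i) = g i := by
        intro i
        obtain ⟨t, h1, h2⟩ := htouch (g i) (g i).2
        exact (hlab t h1 _ h2).2
      have hins : ∀ t, Inside e f t → ∀ v ∈ e t, v ∈ S := by
        intro t ht v hv'
        obtain ⟨i, _, h2⟩ := ht v hv'
        rw [← h2, hv i]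
        exact (g i).2
      have hins' : ∀ t < N, (∀ v ∈ e t, v ∈ S) → Inside e f t := by
        intro t ht h v hv'
        refine ⟨g.symm ⟨v, h v hv'⟩, ?_, ?_⟩
        · simpa [f] using (hlab t ht v hv').1
        · rw [hv]; simp
      have h1 := t1 f
      have hz : ((Finset.range N).filter
          (fun t => (Flip d e c t ∧ Inside e f t) ∧ c t = true)).card = 0 := by
        rw [Finset.card_eq_zero, Finset.filter_eq_empty_iff]
        rintro t ht ⟨⟨_, h2⟩, h3⟩
        have := hblue t (Finset.mem_range.1 ht) (hins t h2)
        rw [h3] at this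
        exact absurd this (by simp)
      rw [hz, pow_zero] at h1
      have hle : ((n : ℝ) ^ 2 / 8) ≤
          ((Finset.range N).filter (fun t => Flip d e c t ∧ Inside e f t)).card := by
        refine hcon.trans ?_
        norm_cast
        apply Finset.card_le_card
        intro t ht
        obtain ⟨a, b, c'⟩ := Finset.mem_filter.1 ht
        exact Finset.mem_filter.2 ⟨a, b, hins' t (Finset.mem_range.1 a) c'⟩
      have h2 := one_sub_pow_le hp0.le hp1.le _ hle
      have h3 : p * ((n : ℝ) ^ 2 / 8) = 4 * n * L := by
        have : p * ((n : ℝ) ^ 2 / 8) = (p * n) * n / 8 := by ring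
        rw [this, hpn]; ring
      rw [h3] at h2
      have h4 : 0 < (1 - p) ^ ((Finset.range N).filter
        (fun t => Flip d e c t ∧ Inside e f t)).card := pow_pos (by linarith) _
      rw [mul_one_div, div_lt_one h4] at h1
      linarith
    · intro U hU
      by_contra hcon
      push Not at hcon
      obtain ⟨g, hg⟩ : ∃ g : Fin (2 * n) → ℕ, ∀ u ∈ U, ∃ i, g i = u := by
        refine ⟨fun i => if h : (i : ℕ) < U.card then (U.equivFin.symm ⟨i, h⟩ : ℕ) else 0, ?_⟩
        intro u hu
        have hlt := (U.equivFin ⟨u, hu⟩).2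
        refine ⟨⟨U.equivFin ⟨u, hu⟩, by omega⟩, ?_⟩
        simp
      let f : Fin (2 * n) → Fin N × Bool := fun i => lab (g i)
      have h1 := t2 f
      have ha : (n : ℝ) * (270 * L) ≤ ((Finset.range N).filter
          (fun t => (Flip d e c t ∧ Inside e f t) ∧ c t = true)).card := by
        refine hcon.trans ?_
        norm_cast
        apply Finset.card_le_card
        intro t ht
        obtain ⟨a, b, c'⟩ := Finset.mem_filter.1 ht
        have hta := Finset.mem_range.1 a
        refine Finset.mem_filter.2 ⟨a, ⟨hflip t b, ?_⟩, b⟩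
        intro v hv
        obtain ⟨i, hi⟩ := hg v (c' v hv)
        refine ⟨i, ?_⟩
        simp only [f, hi]
        exact hlab t hta v hv
      have hb : (((Finset.range N).filter (fun t => Flip d e c t ∧ Inside e f t)).card : ℝ) ≤
          4 * n ^ 2 := by
        have := inside_card e hinj f (fun t => Flip d e c t)
        have h' : (((Finset.range N).filter (fun t => Flip d e c t ∧ Inside e f t)).card : ℝ) ≤
          ((2 * n * (2 * n) : ℕ) : ℝ) := by exact_mod_cast this
        push_cast at h'
        linarith
      have h2 := ratio_ge hp0.le ha hb
      have h3 : (n : ℝ) * (270 * L) / 2 - p * (4 * n ^ 2) = 7 * n * L := by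
        have : p * (4 * (n : ℝ) ^ 2) = (p * n) * (4 * n) := by ring
        rw [this, hpn]; ring
      rw [h3] at h2
      have h4 := mul_le_mul_of_nonneg_left h2 (Real.exp_pos (-(7 * n * L))).le
      rw [← Real.exp_add, neg_add_cancel, Real.exp_zero] at h4
      linarith
    · intro v
      by_contra hcon
      push Not at hcon
      have h1 := t3 (lab v)
      have ha : 4096 / 100000000 * X ≤ ((Finset.range N).filter
          (fun t => (Flip d e c t ∧ Touch e (lab v) t) ∧ c t = true)).card := by
        refine hcon.le.trans ?_
        norm_cast
        apply Finset.card_le_card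
        intro t ht
        obtain ⟨a, b, c'⟩ := Finset.mem_filter.1 ht
        have hta := Finset.mem_range.1 a
        have hl := hlab t hta v c'
        refine Finset.mem_filter.2 ⟨a, ⟨hflip t b, hl.1, ?_⟩, b⟩
        rw [hl.2]
        exact c'
      have hb : (((Finset.range N).filter
          (fun t => Flip d e c t ∧ Touch e (lab v) t)).card : ℝ) ≤ 32 / 100000000 * X ^ 2 := by
        refine le_trans ?_ hM
        exact_mod_cast touch_card hd1 e c hinj (lab v)
      have h2 := ratio_ge hp0.le ha hb
      have h3 : 4096 / 100000000 * X / 2 - p * (32 / 100000000 * X ^ 2) =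
          1024 / 100000000 * X := by
        have : p * (32 / 100000000 * X ^ 2) = (p * X) * (32 / 100000000 * X) := by ring
        rw [this, hpX]; ring
      rw [h3] at h2
      have h4 := mul_le_mul_of_nonneg_left h2 (Real.exp_pos (-(1024 / 100000000 * X))).le
      rw [← Real.exp_add, neg_add_cancel, Real.exp_zero] at h4
      linarith
    · rw [Nat.cast_choose_two]
      have h1 : (n : ℝ) * d ≤ n ^ 2 / 8 := by nlinarith
      have h2 : 4096 / 100000000 * X * (n * (270 * L)) = 4096 * 270 / 100000000 * (n : ℝ) ^ 2 := by
        rw [← hXL]; ring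
      have h3 : ((heavy e N d).card : ℝ) * (270 * L) ^ 2 ≤
          32 * 270 ^ 2 / 100000000 * (n : ℝ) ^ 2 := by
        calc ((heavy e N d).card : ℝ) * (270 * L) ^ 2 
            ≤ 32 / 100000000 * X ^ 2 * (270 * L) ^ 2 :=
              mul_le_mul_of_nonneg_right hM (by positivity)
          _ = _ := by rw [← hXL]; ring
      rw [h2]
      nlinarith

theorem stmt3 :
    ∃ c : ℝ, 0 < c ∧ ∃ n₀ : ℕ, ∀ n : ℕ, n₀ ≤ n →
      c * (n : ℝ) ^ 3 / (Real.log n) ^ 2 ≤ (onlineRamsey 3 n : ℝ) := by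
  refine ⟨1 / 100000000, by norm_num, ?_⟩
  have hlog : ∀ᶠ n : ℕ in Filter.atTop,
      5 * Real.log n ^ 2 ≤ (n : ℝ) / 100000 := by
    have h := (Real.isLittleO_pow_log_id_atTop (n := 2)).bound
      (show (0 : ℝ) < 1 / 500000 by norm_num)
    have h := tendsto_natCast_atTop_atTop.eventually h
    filter_upwards [h] with n hn
    simp only [id, Real.norm_eq_abs] at hn
    rw [abs_of_nonneg (by positivity), abs_of_nonneg (by positivity)] at hn
    linarith
  have hlog1 : ∀ᶠ n : ℕ in Filter.atTop, 1 ≤ Real.log n :=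
    (Real.tendsto_log_atTop.comp tendsto_natCast_atTop_atTop).eventually_ge_atTop 1
  obtain ⟨n₀, hn₀⟩ := Filter.eventually_atTop.1
    ((hlog.and hlog1).and (Filter.eventually_ge_atTop 16))
  refine ⟨n₀, fun n hn => ?_⟩
  obtain ⟨⟨h1, h2⟩, h3⟩ := hn₀ n hn
  by_contra hcon
  push Not at hcon
  have hn0 : (0 : ℝ) < n := by positivity
  refine not_builderWins h3 h2 ?_ (Real.exp_log hn0) h1 hcon ?_
  · nlinarith
  · exact Nat.sInf_mem (s := {N | BuilderWins 3 n N}) (builderWins_nonempty n)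

end OnlineRamseyGame
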